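/- Let k ≥ 1 be an integer, λ > 1 a real number, and suppose (z,w) ∈ ℂ² satisfies w^(k+1) = z·((z-λ⁻¹)/(λ-z))^k with z ∉ {0, λ, λ⁻¹} and w ≠ 0. Then the point (z', w') := (1/z, λ^(-2k/(k+1))/w) also satisfies (w')^(k+1) = z'·((z'-λ⁻¹)/(λ-z'))^k. Moreover, setting G(z,w) := λ^(k/(k+1))·w, one has G(z',w') = G(z,w)⁻¹. (The map κ₂(z,w) = (1/z, λ^(-2k/(k+1))/w) is a symmetry of the Riemann surface M̄ and inverts the hyperbolic Gauss map G.) -/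

import Mathlib

open Complex

/-- The map `κ₂(z,w) = (1/z, λ^(-2k/(k+1))/w)` is a symmetry of the Riemann surface
`w^(k+1) = z ((z-λ⁻¹)/(λ-z))^k` and inverts the hyperbolic Gauss map
`G(z,w) = λ^(k/(k+1)) w`. -/
theorem stmt_2 (k : ℕ) (hk : 1 ≤ k) (lam : ℝ) (hlam : 1 < lam) (z w : ℂ)
    (hzw : w ^ (k + 1) = z * ((z - (lam : ℂ)⁻¹) / ((lam : ℂ) - z)) ^ k)
    (hz0 : z ≠ 0) (hzl : z ≠ (lam : ℂ)) (hzli : z ≠ (lam : ℂ)⁻¹) (hw : w ≠ 0) :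
    (((lam ^ (-(2 * (k : ℝ)) / ((k : ℝ) + 1)) : ℝ) : ℂ) / w) ^ (k + 1) =
        (1 / z) * (((1 / z) - (lam : ℂ)⁻¹) / ((lam : ℂ) - (1 / z))) ^ k ∧
      ((lam ^ ((k : ℝ) / ((k : ℝ) + 1)) : ℝ) : ℂ) *
          (((lam ^ (-(2 * (k : ℝ)) / ((k : ℝ) + 1)) : ℝ) : ℂ) / w) =
        (((lam ^ ((k : ℝ) / ((k : ℝ) + 1)) : ℝ) : ℂ) * w)⁻¹ := by
  have hl0 : 0 < lam := by linarith
  have hlc : (lam : ℂ) ≠ 0 := by exact_mod_cast hl0.ne'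
  have hk1 : (k : ℝ) + 1 ≠ 0 := by positivity
  have ha0 : 0 < lam ^ ((k : ℝ) / ((k : ℝ) + 1)) := Real.rpow_pos_of_pos hl0 _
  have hb : lam ^ (-(2 * (k : ℝ)) / ((k : ℝ) + 1))
      = ((lam ^ ((k : ℝ) / ((k : ℝ) + 1))) ^ 2)⁻¹ := by
    rw [← Real.rpow_natCast, ← Real.rpow_mul hl0.le, ← Real.rpow_neg hl0.le]
    congr 1
    push_cast
    ring
  have ha : (lam ^ ((k : ℝ) / ((k : ℝ) + 1))) ^ (k + 1) = lam ^ k := by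
    rw [← Real.rpow_natCast, ← Real.rpow_mul hl0.le, ← Real.rpow_natCast]
    congr 1
    push_cast
    field_simp
  rw [hb]
  generalize lam ^ ((k : ℝ) / ((k : ℝ) + 1)) = a at ha ha0 ⊢
  have hac : (a : ℂ) ≠ 0 := by exact_mod_cast ha0.ne'
  have ha' : (a : ℂ) ^ (k + 1) = (lam : ℂ) ^ k := by exact_mod_cast ha
  push_cast
  refine ⟨?_, ?_⟩
  · have h1 : (lam : ℂ) - z ≠ 0 := sub_ne_zero.mpr (Ne.symm hzl)
    have h2 : z - (lam : ℂ)⁻¹ ≠ 0 := sub_ne_zero.mpr hzli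
    have h3 : (lam : ℂ) - 1 / z ≠ 0 := by
      intro h
      apply hzli
      field_simp at h
      field_simp
      linear_combination h
    have key : ((1 / z) - (lam : ℂ)⁻¹) / ((lam : ℂ) - (1 / z))
        = ((lam : ℂ) ^ 2)⁻¹ * ((z - (lam : ℂ)⁻¹) / ((lam : ℂ) - z))⁻¹ := by
      rw [inv_div, div_eq_iff h3, ← mul_div_assoc, div_mul_eq_mul_div, eq_div_iff h2]
      field_simp
    rw [key, div_pow, hzw, mul_pow, inv_pow, inv_pow, inv_pow, pow_right_comm, ha',
      pow_right_comm (lam : ℂ) 2 k, div_eq_mul_inv, mul_inv]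
    ring
  · field_simp
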